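/- arXiv:1208.5278 — 2 statements merged into one kernel-verified Lean document; each statement's English description precedes it below -/
import Mathlib

section
/- The q-deformed W(2,2) algebra (W_q, [·,·]_q, α) is a Hom-Lie algebra; that is, the bracket [·,·]_q is skew-symmetric ([x,y]_q = −[y,x]_q for all x, y ∈ W_q) and satisfies the Hom-Jacobi identity [[x,y]_q, α(z)]_q + [[y,z]_q, α(x)]_q + [[z,x]_q, α(y)]_q = 0 for all x, y, z ∈ W_q. -/
noncomputable section

/-- The underlying space of the q-deformed W(2,2) algebra: formal ℂ-linear
combinations of the basis `{L_n, M_n : n ∈ ℤ}`. -/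
abbrev Wq : Type := (ℤ →₀ ℂ) × (ℤ →₀ ℂ)

/-- The basis vector `L_n`. -/
def Lb (n : ℤ) : Wq := (Finsupp.single n 1, 0)

/-- The basis vector `M_n`. -/
def Mb (n : ℤ) : Wq := (0, Finsupp.single n 1)

/-- The q-number `[n]_q = (q^n - q^(-n))/(q - q⁻¹)`. -/
def qnum (q : ℂ) (n : ℤ) : ℂ := (q ^ n - q ^ (-n)) / (q - q⁻¹)

/-- `⟨n⟩_q = q^n + q^(-n)`. -/
def qang (q : ℂ) (n : ℤ) : ℂ := q ^ n + q ^ (-n)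

/-!
Write `d n = q ^ n - q ^ (-n)`, so that `[n]_q = d n / (q - q⁻¹)`. The product formulas
`⟨a⟩ * d b = d (b + a) + d (b - a)` and `d a * d b = ⟨a + b⟩ - ⟨a - b⟩` turn each summand
`d (m - n) * ⟨k⟩ * d (k - (n + m))` of the Hom-Jacobi identity for `L_n`, `L_m`, `L_k` into a
difference that telescopes under cyclic permutation. The elements `M_n` need no separate
computation: setting `M_n = ε L_n` with `ε ^ 2 = 0`, all brackets are instances of the single rule
`[ε ^ a L_n, ε ^ b L_m] = [m - n]_q ε ^ (a + b) L_(n + m)`.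
-/

section HomLie

variable {R V : Type*} [CommRing R] [AddCommGroup V] [Module R V]

theorem bracket_skew_of_span_eq_top {ι : Type*} {e : ι → V}
    (hspan : Submodule.span R (Set.range e) = ⊤) {br : V →ₗ[R] V →ₗ[R] V}
    (hskew : ∀ i j, br (e i) (e j) = -br (e j) (e i)) (x y : V) :
    br x y = -br y x := by
  have hflip : br = -br.flip :=
    LinearMap.ext_on_range hspan fun i => LinearMap.ext_on_range hspan fun j => hskew i j
  exact LinearMap.congr_fun₂ hflip x y

/-- The Hom-Jacobiator `[[x, y], α z] + [[y, z], α x] + [[z, x], α y]`, the obstruction to the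
Hom-Jacobi identity. Only linearity in `z` is bundled; linearity in `x` and `y` follows from
cyclic symmetry. -/
def homJacobiator (br : V →ₗ[R] V →ₗ[R] V) (α : V →ₗ[R] V) (x y : V) : V →ₗ[R] V :=
  br (br x y) ∘ₗ α + br.flip (α x) ∘ₗ br y + br.flip (α y) ∘ₗ br.flip x

theorem homJacobiator_apply (br : V →ₗ[R] V →ₗ[R] V) (α : V →ₗ[R] V) (x y z : V) :
    homJacobiator br α x y z = br (br x y) (α z) + br (br y z) (α x) + br (br z x) (α y) :=
  rfl

theorem homJacobiator_rotate (br : V →ₗ[R] V →ₗ[R] V) (α : V →ₗ[R] V) (x y z : V) :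
    homJacobiator br α x y z = homJacobiator br α y z x := by
  simp only [homJacobiator_apply]
  abel

theorem homJacobiator_eq_zero_of_span_eq_top {ι : Type*} {e : ι → V}
    (hspan : Submodule.span R (Set.range e) = ⊤) {br : V →ₗ[R] V →ₗ[R] V} {α : V →ₗ[R] V}
    (hJ : ∀ i j k, homJacobiator br α (e i) (e j) (e k) = 0) (x y : V) :
    homJacobiator br α x y = 0 := by
  have two_basis (i j) : homJacobiator br α (e i) (e j) = 0 :=
    LinearMap.ext_on_range hspan (hJ i j)
  have one_basis (i) (x : V) : homJacobiator br α (e i) x = 0 :=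
    LinearMap.ext_on_range hspan fun j => by
      rw [← homJacobiator_rotate, two_basis, LinearMap.zero_apply, LinearMap.zero_apply]
  exact LinearMap.ext_on_range hspan fun i => by
    rw [← homJacobiator_rotate, one_basis, LinearMap.zero_apply, LinearMap.zero_apply]

end HomLie

section QNumbers

variable {R : Type*} [CommRing R]

/-- The numerator `q ^ n - q ^ (-n)` of the `q`-number `[n]_q`. Leaving out the denominator
`q - q⁻¹` lets `q` be any unit of any commutative ring. -/
def qDiff (q : Rˣ) (n : ℤ) : R := ↑(q ^ n) - ↑(q ^ (-n))

/-- The symmetric sum `⟨n⟩_q = q ^ n + q ^ (-n)` for a unit `q` of a commutative ring. -/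
def qSum (q : Rˣ) (n : ℤ) : R := ↑(q ^ n) + ↑(q ^ (-n))

theorem qDiff_neg (q : Rˣ) (n : ℤ) : qDiff q (-n) = -qDiff q n := by
  simp only [qDiff, neg_neg, neg_sub]

theorem qSum_neg (q : Rˣ) (n : ℤ) : qSum q (-n) = qSum q n := by
  simp only [qSum, neg_neg, add_comm]

theorem qSum_mul_qDiff (q : Rˣ) (a b : ℤ) :
    qSum q a * qDiff q b = qDiff q (b + a) + qDiff q (b - a) := by
  simp only [qSum, qDiff, sub_eq_add_neg, neg_add, neg_neg, zpow_add, Units.val_mul]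
  ring

theorem qDiff_mul_qDiff (q : Rˣ) (a b : ℤ) :
    qDiff q a * qDiff q b = qSum q (a + b) - qSum q (a - b) := by
  simp only [qSum, qDiff, sub_eq_add_neg, neg_add, neg_neg, zpow_add, Units.val_mul]
  ring

theorem qDiff_mul_qSum_mul_qDiff (q : Rˣ) (n m k : ℤ) :
    qDiff q (m - n) * (qSum q k * qDiff q (k - (n + m))) =
      (qSum q (2 * (k - n)) - qSum q (2 * (m - k))) - (qSum q (2 * m) - qSum q (2 * n)) := by
  calc qDiff q (m - n) * (qSum q k * qDiff q (k - (n + m)))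
      = qDiff q (m - n) * qDiff q (2 * k - (n + m)) - qDiff q (m - n) * qDiff q (n + m) := by
        rw [qSum_mul_qDiff, show k - (n + m) + k = 2 * k - (n + m) by ring,
          show k - (n + m) - k = -(n + m) by ring, qDiff_neg]
        ring
    _ = (qSum q (2 * (k - n)) - qSum q (2 * (m - k))) -
          (qSum q (2 * m) - qSum q (-(2 * n))) := by
        simp only [qDiff_mul_qDiff]
        ring_nf
    _ = _ := by rw [qSum_neg]

theorem qDiff_homJacobi (q : Rˣ) (n m k : ℤ) :
    qDiff q (m - n) * (qSum q k * qDiff q (k - (n + m))) +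
      qDiff q (k - m) * (qSum q n * qDiff q (n - (m + k))) +
      qDiff q (n - k) * (qSum q m * qDiff q (m - (k + n))) = 0 := by
  simp only [qDiff_mul_qSum_mul_qDiff]
  ring

end QNumbers

section QWitt

variable {R V A : Type*} [CommRing R] [AddCommGroup V] [Module R V] [AddCommSemigroup A]
  {q : Rˣ} {c : R} {e : A × ℤ → V} {br : V →ₗ[R] V →ₗ[R] V} {α : V →ₗ[R] V}

theorem bracket_skew_of_qDiff
    (hbr : ∀ i j, br (e i) (e j) = (c * qDiff q (j.2 - i.2)) • e (i + j)) (i j : A × ℤ) :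
    br (e i) (e j) = -br (e j) (e i) := by
  rw [hbr, hbr, ← neg_sub i.2 j.2, qDiff_neg, mul_neg, neg_smul, add_comm]

theorem bracket_bracket_twist_of_qDiff
    (hbr : ∀ i j, br (e i) (e j) = (c * qDiff q (j.2 - i.2)) • e (i + j))
    (hα : ∀ i, α (e i) = qSum q i.2 • e i) (i j k : A × ℤ) :
    br (br (e i) (e j)) (α (e k)) =
      (c ^ 2 * (qDiff q (j.2 - i.2) * (qSum q k.2 * qDiff q (k.2 - (i.2 + j.2))))) •
        e (i + j + k) := by
  simp only [hbr, hα, map_smul, LinearMap.smul_apply, smul_smul, Prod.snd_add]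
  congr 1
  ring

theorem homJacobiator_eq_zero_of_qDiff
    (hbr : ∀ i j, br (e i) (e j) = (c * qDiff q (j.2 - i.2)) • e (i + j))
    (hα : ∀ i, α (e i) = qSum q i.2 • e i) (i j k : A × ℤ) :
    homJacobiator br α (e i) (e j) (e k) = 0 := by
  have hjki : j + k + i = i + j + k := by ac_rfl
  have hkij : k + i + j = i + j + k := by ac_rfl
  simp only [homJacobiator_apply, bracket_bracket_twist_of_qDiff hbr hα, hjki, hkij]
  rw [← add_smul, ← add_smul, ← mul_add, ← mul_add, qDiff_homJacobi, mul_zero, zero_smul]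

end QWitt

section W22

variable {R V : Type*} [CommRing R] [AddCommGroup V] [Module R V]

/-- The family `ε ^ a L_n`, where `M_n = ε L_n` and `ε ^ 2 = 0`, indexed by `(a, n)`. -/
def nilpotentFamily (L M : ℤ → V) : ℕ × ℤ → V
  | (0, n) => L n
  | (1, n) => M n
  | (_ + 2, _) => 0

theorem span_range_nilpotentFamily {L M : ℤ → V}
    (hspan : Submodule.span R (Set.range L ∪ Set.range M) = ⊤) :
    Submodule.span R (Set.range (nilpotentFamily L M)) = ⊤ := by
  refine top_unique (hspan.ge.trans (Submodule.span_mono (Set.union_subset ?_ ?_)))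
  · rintro _ ⟨n, rfl⟩
    exact ⟨(0, n), rfl⟩
  · rintro _ ⟨n, rfl⟩
    exact ⟨(1, n), rfl⟩

theorem bracket_nilpotentFamily {L M : ℤ → V} {f : ℤ → R} {br : V →ₗ[R] V →ₗ[R] V}
    (hLL : ∀ n m, br (L n) (L m) = f (m - n) • L (m + n))
    (hLM : ∀ n m, br (L n) (M m) = f (m - n) • M (m + n))
    (hML : ∀ m n, br (M m) (L n) = f (n - m) • M (m + n))
    (hMM : ∀ n m, br (M n) (M m) = 0) :
    ∀ i j, br (nilpotentFamily L M i) (nilpotentFamily L M j) =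
      f (j.2 - i.2) • nilpotentFamily L M (i + j)
  | (0, n), (0, m) => by simpa [nilpotentFamily, add_comm] using hLL n m
  | (0, n), (1, m) => by simpa [nilpotentFamily, add_comm] using hLM n m
  | (1, n), (0, m) => by simpa [nilpotentFamily] using hML n m
  | (1, n), (1, m) => by simpa [nilpotentFamily] using hMM n m
  | (a + 2, n), (b, m) => by simp [nilpotentFamily, add_right_comm a 2 b]
  | (a, n), (b + 2, m) => by simp [nilpotentFamily]

theorem twist_nilpotentFamily {L M : ℤ → V} {g : ℤ → R} {α : V →ₗ[R] V}
    (hL : ∀ n, α (L n) = g n • L n) (hM : ∀ n, α (M n) = g n • M n) :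
    ∀ i, α (nilpotentFamily L M i) = g i.2 • nilpotentFamily L M i
  | (0, n) => hL n
  | (1, n) => hM n
  | (_ + 2, _) => by simp only [nilpotentFamily, map_zero, smul_zero]

/-- The scalar `c` plays the role of `(q - q⁻¹)⁻¹`, for which `c * qDiff q n` is `[n]_q`. -/
theorem qW22_is_HomLie_general (q : Rˣ) (c : R) {L M : ℤ → V}
    (hspan : Submodule.span R (Set.range L ∪ Set.range M) = ⊤)
    (br : V →ₗ[R] V →ₗ[R] V) (α : V →ₗ[R] V)
    (hLL : ∀ n m, br (L n) (L m) = (c * qDiff q (m - n)) • L (m + n))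
    (hLM : ∀ n m, br (L n) (M m) = (c * qDiff q (m - n)) • M (m + n))
    (hML : ∀ m n, br (M m) (L n) = (c * qDiff q (n - m)) • M (m + n))
    (hMM : ∀ n m, br (M n) (M m) = 0)
    (hαL : ∀ n, α (L n) = qSum q n • L n)
    (hαM : ∀ n, α (M n) = qSum q n • M n) :
    (∀ x y, br x y = -br y x) ∧
      ∀ x y z, br (br x y) (α z) + br (br y z) (α x) + br (br z x) (α y) = 0 := by
  have hspan' := span_range_nilpotentFamily hspan
  have hbr := bracket_nilpotentFamily (f := fun n => c * qDiff q n) hLL hLM hML hMM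
  have hα := twist_nilpotentFamily hαL hαM
  refine ⟨bracket_skew_of_span_eq_top hspan' (bracket_skew_of_qDiff hbr), fun x y z => ?_⟩
  have hJ := homJacobiator_eq_zero_of_span_eq_top hspan'
    (homJacobiator_eq_zero_of_qDiff hbr hα) x y
  rw [← homJacobiator_apply, hJ, LinearMap.zero_apply]

end W22

theorem span_range_Lb_union_range_Mb :
    Submodule.span ℂ (Set.range Lb ∪ Set.range Mb) = ⊤ := by
  have hsingle : Submodule.span ℂ (Set.range fun n : ℤ => Finsupp.single n (1 : ℂ)) = ⊤ := by
    simpa only [Finsupp.coe_basisSingleOne] using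
      (Finsupp.basisSingleOne (R := ℂ) (ι := ℤ)).span_eq
  have hL : Set.range Lb = LinearMap.inl ℂ (ℤ →₀ ℂ) (ℤ →₀ ℂ) ''
      Set.range fun n => Finsupp.single n 1 :=
    Set.range_comp (LinearMap.inl ℂ _ _) _
  have hM : Set.range Mb = LinearMap.inr ℂ (ℤ →₀ ℂ) (ℤ →₀ ℂ) ''
      Set.range fun n => Finsupp.single n 1 :=
    Set.range_comp (LinearMap.inr ℂ _ _) _
  rw [hL, hM, LinearMap.span_inl_union_inr, hsingle, Submodule.prod_top]

theorem qnum_eq_inv_mul_qDiff {q : ℂ} (hq : q ≠ 0) (n : ℤ) :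
    qnum q n = (q - q⁻¹)⁻¹ * qDiff (Units.mk0 q hq) n := by
  simp only [qnum, qDiff, Units.val_zpow_eq_zpow_val, Units.val_mk0, div_eq_inv_mul]

theorem qang_eq_qSum {q : ℂ} (hq : q ≠ 0) (n : ℤ) : qang q n = qSum (Units.mk0 q hq) n := by
  simp only [qang, qSum, Units.val_zpow_eq_zpow_val, Units.val_mk0]

/-- The q-deformed W(2,2) algebra `(W_q, [·,·]_q, α)` is a Hom-Lie algebra:
the bracket is skew-symmetric and satisfies the Hom-Jacobi identity. -/
theorem qW22_is_HomLie (q : ℂ) (hq0 : q ≠ 0)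
    (hq1 : ∀ k : ℤ, 1 ≤ k → q ^ k ≠ 1)
    (br : Wq →ₗ[ℂ] Wq →ₗ[ℂ] Wq) (α : Wq →ₗ[ℂ] Wq)
    (hLL : ∀ n m : ℤ, br (Lb n) (Lb m) = qnum q (m - n) • Lb (m + n))
    (hLM : ∀ n m : ℤ, br (Lb n) (Mb m) = qnum q (m - n) • Mb (m + n))
    (hML : ∀ m n : ℤ, br (Mb m) (Lb n) = qnum q (n - m) • Mb (m + n))
    (hMM : ∀ n m : ℤ, br (Mb n) (Mb m) = 0)
    (hαL : ∀ n : ℤ, α (Lb n) = qang q n • Lb n)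
    (hαM : ∀ n : ℤ, α (Mb n) = qang q n • Mb n) :
    (∀ x y : Wq, br x y = - br y x) ∧
    (∀ x y z : Wq,
      br (br x y) (α z) + br (br y z) (α x) + br (br z x) (α y) = 0) := by
  simp only [qnum_eq_inv_mul_qDiff hq0, qang_eq_qSum hq0] at hLL hLM hML hαL hαM
  exact qW22_is_HomLie_general _ _ span_range_Lb_union_range_Mb br α hLL hLM hML hMM hαL hαM
end
end

section
/- Let β and γ be the bilinear maps W_q × W_q → ℂ determined on basis elements by β(L_m, L_n) = δ_{m,−n}·([m−1]_q[m]_q[m+1]_q)/([2]_q[3]_q⟨m⟩_q), β(L_m, M_n) = β(M_m, L_n) = β(M_m, M_n) = 0, and γ(L_m, M_n) = δ_{m,−n}·([m−1]_q[m]_q[m+1]_q)/([2]_q[3]_q⟨m⟩_q), γ(M_m, L_n) = −δ_{m,−n}·([n−1]_q[n]_q[n+1]_q)/([2]_q[3]_q⟨n⟩_q), γ(L_m, L_n) = γ(M_m, M_n) = 0. Then β and γ are 2-cocycles on the Hom-Lie algebra (W_q, [·,·]_q, α): each is skew-symmetric and satisfies ψ(α(x),[y,z]_q) + ψ(α(y),[z,x]_q)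 + ψ(α(z),[x,y]_q) = 0 for all x,y,z ∈ W_q. -/
/-!
A skew form that pairs the degrees `m` and `-m` with weight `c m` is a 2-cocycle as soon as the
numbers `⟨m⟩ c(m)` satisfy a cyclic identity over all `m + n + p = 0`. For such triples
`[p - n] [m] = [n]² - [p]²`, and `[m - 1] [m + 1] = [m]² - [1]²`, so for the coefficients at hand
the identity is, up to a constant, `∑ ([m]² - [1]²) ([n]² - [p]²) = 0`, the sum being cyclic.
The form `γ` is the same cocycle read on `L + εM` with `ε² = 0`, taking the coefficient of `ε`;
it therefore needs no identity beyond the one for `β`.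
-/

noncomputable section

/-- The value `[m−1]_q[m]_q[m+1]_q / ([2]_q[3]_q⟨m⟩_q)` appearing in the
2-cocycles `β` and `γ`. -/
def cocyc (q : ℂ) (m : ℤ) : ℂ :=
  qnum q (m - 1) * qnum q m * qnum q (m + 1) / (qnum q 2 * qnum q 3 * qang q m)

section HomCocycle

variable {R V A : Type*} [CommRing R] [AddCommGroup V] [Module R V] [AddCommGroup A] [Module R A]

/-- `ψ` is a 2-cocycle, with values in the trivial module `A`, for the bracket `br` twisted by `α`.
No Hom-Lie axiom is imposed on `br` and `α`. -/
structure IsHomCocycle (br : V →ₗ[R] V →ₗ[R] V) (α : V →ₗ[R] V) (ψ : V →ₗ[R] V →ₗ[R] A) :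
    Prop where
  skew : ∀ x y, ψ x y = -ψ y x
  cyclic : ∀ x y z, ψ (α x) (br y z) + ψ (α y) (br z x) + ψ (α z) (br x y) = 0

/-- The left-hand side of the cocycle identity, as a linear map in its last argument. -/
def cyclicSum (br : V →ₗ[R] V →ₗ[R] V) (α : V →ₗ[R] V) (ψ : V →ₗ[R] V →ₗ[R] A) (x y : V) :
    V →ₗ[R] A :=
  ψ (α x) ∘ₗ br y + ψ (α y) ∘ₗ br.flip x + ψ.flip (br x y) ∘ₗ α

variable {br : V →ₗ[R] V →ₗ[R] V} {α : V →ₗ[R] V} {ψ : V →ₗ[R] V →ₗ[R] A} {s : Set V}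

theorem cyclicSum_apply (x y z : V) :
    cyclicSum br α ψ x y z = ψ (α x) (br y z) + ψ (α y) (br z x) + ψ (α z) (br x y) :=
  rfl

theorem cyclicSum_rotate (x y z : V) : cyclicSum br α ψ x y z = cyclicSum br α ψ y z x := by
  simp only [cyclicSum_apply]
  abel

theorem skew_of_span_eq_top (hs : Submodule.span R s = ⊤)
    (h : ∀ x ∈ s, ∀ y ∈ s, ψ x y = -ψ y x) (x y : V) : ψ x y = -ψ y x := by
  have key : ψ = -ψ.flip :=
    LinearMap.ext_on hs fun x hx => LinearMap.ext_on hs fun y hy => h x hx y hy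
  exact LinearMap.congr_fun₂ key x y

theorem cyclicSum_eq_zero_of_span_eq_top (hs : Submodule.span R s = ⊤)
    (h : ∀ x ∈ s, ∀ y ∈ s, ∀ z ∈ s, cyclicSum br α ψ x y z = 0) (x y z : V) :
    cyclicSum br α ψ x y z = 0 := by
  have extend {x y : V} (hxy : ∀ z ∈ s, cyclicSum br α ψ x y z = 0) (z : V) :
      cyclicSum br α ψ x y z = 0 :=
    LinearMap.congr_fun (LinearMap.ext_on (g := 0) hs hxy) z
  refine extend (fun z hz => ?_) z
  rw [cyclicSum_rotate, cyclicSum_rotate]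
  refine extend (fun y hy => ?_) y
  rw [cyclicSum_rotate, cyclicSum_rotate]
  exact extend (h y hy z hz) x

theorem IsHomCocycle.of_span_eq_top (hs : Submodule.span R s = ⊤)
    (skew : ∀ x ∈ s, ∀ y ∈ s, ψ x y = -ψ y x)
    (cyclic : ∀ x ∈ s, ∀ y ∈ s, ∀ z ∈ s,
      ψ (α x) (br y z) + ψ (α y) (br z x) + ψ (α z) (br x y) = 0) :
    IsHomCocycle br α ψ :=
  ⟨skew_of_span_eq_top hs skew, cyclicSum_eq_zero_of_span_eq_top hs cyclic⟩

end HomCocycle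

section QNumbers

variable {q : ℂ}

theorem qnum_neg (q : ℂ) (n : ℤ) : qnum q (-n) = -qnum q n := by
  simp only [qnum, neg_neg, ← neg_div, neg_sub]

theorem qang_neg (q : ℂ) (n : ℤ) : qang q (-n) = qang q n := by
  simp only [qang, neg_neg, add_comm]

theorem qnum_add_mul_qnum_sub (hq : q ≠ 0) (a b : ℤ) :
    qnum q (a + b) * qnum q (a - b) = qnum q a ^ 2 - qnum q b ^ 2 := by
  have ha : q ^ a ≠ 0 := zpow_ne_zero _ hq
  have hb : q ^ b ≠ 0 := zpow_ne_zero _ hq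
  simp only [qnum, neg_add_rev, neg_sub, zpow_add₀ hq, zpow_sub₀ hq, zpow_neg]
  rw [div_mul_div_comm, div_pow, div_pow, ← sub_div, ← sq]
  congr 1
  field_simp
  ring

theorem qnum_mul_qnum_sub_of_add_eq_zero (hq : q ≠ 0) {m n p : ℤ} (h : m + n + p = 0) :
    qnum q m * qnum q (p - n) = qnum q n ^ 2 - qnum q p ^ 2 := by
  obtain rfl : m = -(p + n) := by omega
  rw [qnum_neg, neg_mul, qnum_add_mul_qnum_sub hq, neg_sub]

theorem ne_zero_of_qnum_ne_zero {n : ℤ} (h : qnum q n ≠ 0) : q ≠ 0 := by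
  rintro rfl
  simp [qnum] at h

theorem zpow_ne_one_of_ne_zero (hq : ∀ k : ℤ, 1 ≤ k → q ^ k ≠ 1) {n : ℤ} (hn : n ≠ 0) :
    q ^ n ≠ 1 := by
  rcases hn.lt_or_gt with hneg | hpos
  · simpa [zpow_neg] using hq (-n) (by omega)
  · exact hq n hpos

theorem qnum_ne_zero (hq₀ : q ≠ 0) (hq : ∀ k : ℤ, 1 ≤ k → q ^ k ≠ 1) {n : ℤ} (hn : n ≠ 0) :
    qnum q n ≠ 0 := by
  have sub_ne_zero_of_ne {k : ℤ} (hk : k ≠ 0) : q ^ k - q ^ (-k) ≠ 0 := by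
    intro h
    apply zpow_ne_one_of_ne_zero hq (mul_ne_zero two_ne_zero hk)
    rw [two_mul, zpow_add₀ hq₀]
    nth_rewrite 1 [sub_eq_zero.mp h]
    rw [← zpow_add₀ hq₀, neg_add_cancel, zpow_zero]
  exact div_ne_zero (sub_ne_zero_of_ne hn) (by simpa using sub_ne_zero_of_ne one_ne_zero)

theorem qang_ne_zero (hq₀ : q ≠ 0) (hq : ∀ k : ℤ, 1 ≤ k → q ^ k ≠ 1) (n : ℤ) :
    qang q n ≠ 0 := by
  rcases eq_or_ne n 0 with rfl | hn
  · norm_num [qang]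
  intro h
  have sq_eq : q ^ n * q ^ n = -1 := by
    nth_rewrite 1 [eq_neg_of_add_eq_zero_left h]
    rw [neg_mul, ← zpow_add₀ hq₀, neg_add_cancel, zpow_zero]
  apply zpow_ne_one_of_ne_zero hq (mul_ne_zero four_ne_zero hn)
  calc q ^ (4 * n) = q ^ n * q ^ n * (q ^ n * q ^ n) := by
        simp only [← zpow_add₀ hq₀]
        congr 1
        ring
    _ = 1 := by rw [sq_eq, neg_mul_neg, one_mul]

end QNumbers

section WittCocycle

variable {q : ℂ} {c : ℤ → ℂ}

/-- `c` is the coefficient function of a degree-zero 2-cocycle `(L_m, L_n) ↦ δ_{m,-n} c(m)` on the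
q-deformed Witt algebra spanned by the `L_n`, expressed as conditions on the integer indices. -/
structure IsWittCocycle (q : ℂ) (c : ℤ → ℂ) : Prop where
  neg : ∀ n, c (-n) = -c n
  cyclic : ∀ m n p, m + n + p = 0 →
    qnum q (p - n) * (qang q m * c m) + qnum q (m - p) * (qang q n * c n) +
      qnum q (n - m) * (qang q p * c p) = 0

/-- The form `δ_{m,-n} c(m)` on indices. -/
def antidiag (c : ℤ → ℂ) (m n : ℤ) : ℂ := if m = -n then c m else 0

theorem IsWittCocycle.antidiag_skew (hc : IsWittCocycle q c) (m n : ℤ) :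
    antidiag c m n = -antidiag c n m := by
  rw [antidiag, antidiag]
  by_cases h : m = -n
  · rw [if_pos h, if_pos (by omega), h, hc.neg]
  · rw [if_neg h, if_neg (by omega), neg_zero]

theorem IsWittCocycle.antidiag_cyclic (hc : IsWittCocycle q c) (m n p : ℤ) :
    qnum q (p - n) * (qang q m * antidiag c m (p + n)) +
      qnum q (m - p) * (qang q n * antidiag c n (m + p)) +
      qnum q (n - m) * (qang q p * antidiag c p (n + m)) = 0 := by
  simp only [antidiag]
  by_cases h : m + n + p = 0
  · rw [if_pos (by omega), if_pos (by omega), if_pos (by omega)]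
    exact hc.cyclic m n p h
  · rw [if_neg (by omega), if_neg (by omega), if_neg (by omega)]
    simp only [mul_zero, add_zero]

theorem cocyc_neg (q : ℂ) (n : ℤ) : cocyc q (-n) = -cocyc q n := by
  have h_pred : qnum q (-n - 1) = -qnum q (n + 1) := by rw [← qnum_neg, neg_add']
  have h_succ : qnum q (-n + 1) = -qnum q (n - 1) := by rw [← qnum_neg, neg_sub', sub_neg_eq_add]
  simp only [cocyc, h_pred, h_succ, qnum_neg, qang_neg]
  ring

theorem qang_mul_cocyc (hq : q ≠ 0) {n : ℤ} (hn : qang q n ≠ 0) :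
    qang q n * cocyc q n =
      (qnum q n ^ 2 - qnum q 1 ^ 2) * qnum q n / (qnum q 2 * qnum q 3) := by
  rw [← qnum_add_mul_qnum_sub hq, cocyc, ← div_div, mul_div_cancel₀ _ hn]
  ring

theorem isWittCocycle_cocyc (hq : q ≠ 0) (hang : ∀ n, qang q n ≠ 0) :
    IsWittCocycle q (cocyc q) where
  neg := cocyc_neg q
  cyclic m n p h := by
    have hm := qnum_mul_qnum_sub_of_add_eq_zero hq (m := m) (n := n) (p := p) h
    have hn := qnum_mul_qnum_sub_of_add_eq_zero hq (m := n) (n := p) (p := m) (by omega)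
    have hp := qnum_mul_qnum_sub_of_add_eq_zero hq (m := p) (n := m) (p := n) (by omega)
    simp only [qang_mul_cocyc hq (hang _), div_eq_mul_inv]
    linear_combination (qnum q 2 * qnum q 3)⁻¹ *
      ((qnum q m ^ 2 - qnum q 1 ^ 2) * hm + (qnum q n ^ 2 - qnum q 1 ^ 2) * hn +
        (qnum q p ^ 2 - qnum q 1 ^ 2) * hp)

end WittCocycle

section QW22

/-- `br` and `α` are the bracket and the twist of the q-deformed W(2,2) algebra, given by their
values on the basis. -/
structure IsQW22 (q : ℂ) (br : Wq →ₗ[ℂ] Wq →ₗ[ℂ] Wq) (α : Wq →ₗ[ℂ] Wq) : Prop where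
  LL : ∀ n m, br (Lb n) (Lb m) = qnum q (m - n) • Lb (m + n)
  LM : ∀ n m, br (Lb n) (Mb m) = qnum q (m - n) • Mb (m + n)
  ML : ∀ m n, br (Mb m) (Lb n) = qnum q (n - m) • Mb (m + n)
  MM : ∀ n m, br (Mb n) (Mb m) = 0
  twist_L : ∀ n, α (Lb n) = qang q n • Lb n
  twist_M : ∀ n, α (Mb n) = qang q n • Mb n

variable {q : ℂ} {br : Wq →ₗ[ℂ] Wq →ₗ[ℂ] Wq} {α : Wq →ₗ[ℂ] Wq} {c : ℤ → ℂ}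
  {ψ : Wq →ₗ[ℂ] Wq →ₗ[ℂ] ℂ}

theorem IsQW22.isHomCocycle_of_LL (hW : IsQW22 q br α) (hc : IsWittCocycle q c)
    (hLL : ∀ m n, ψ (Lb m) (Lb n) = antidiag c m n) (hLM : ∀ m n, ψ (Lb m) (Mb n) = 0)
    (hML : ∀ m n, ψ (Mb m) (Lb n) = 0) (hMM : ∀ m n, ψ (Mb m) (Mb n) = 0) :
    IsHomCocycle br α ψ := by
  apply IsHomCocycle.of_span_eq_top span_range_Lb_union_range_Mb
  · rintro _ (⟨m, rfl⟩ | ⟨m, rfl⟩) _ (⟨n, rfl⟩ | ⟨n, rfl⟩)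
    · simpa only [hLL] using hc.antidiag_skew m n
    all_goals simp only [hLM, hML, hMM, neg_zero]
  · rintro _ (⟨m, rfl⟩ | ⟨m, rfl⟩) _ (⟨n, rfl⟩ | ⟨n, rfl⟩) _ (⟨p, rfl⟩ | ⟨p, rfl⟩) <;>
      simp only [hW.LL, hW.LM, hW.ML, hW.MM, hW.twist_L, hW.twist_M, map_smul, map_zero,
        LinearMap.smul_apply, smul_eq_mul, hLL, hLM, hML, hMM, mul_zero, add_zero]
    exact hc.antidiag_cyclic m n p

theorem IsQW22.isHomCocycle_of_LM (hW : IsQW22 q br α) (hc : IsWittCocycle q c)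
    (hLM : ∀ m n, ψ (Lb m) (Mb n) = antidiag c m n)
    (hML : ∀ m n, ψ (Mb m) (Lb n) = antidiag c m n)
    (hLL : ∀ m n, ψ (Lb m) (Lb n) = 0) (hMM : ∀ m n, ψ (Mb m) (Mb n) = 0) :
    IsHomCocycle br α ψ := by
  have hW_ML (m n : ℤ) : br (Mb m) (Lb n) = qnum q (n - m) • Mb (n + m) := by
    rw [hW.ML, add_comm]
  apply IsHomCocycle.of_span_eq_top span_range_Lb_union_range_Mb
  · rintro _ (⟨m, rfl⟩ | ⟨m, rfl⟩) _ (⟨n, rfl⟩ | ⟨n, rfl⟩) <;>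
      simp only [hLL, hLM, hML, hMM, neg_zero]
    all_goals exact hc.antidiag_skew m n
  · rintro _ (⟨m, rfl⟩ | ⟨m, rfl⟩) _ (⟨n, rfl⟩ | ⟨n, rfl⟩) _ (⟨p, rfl⟩ | ⟨p, rfl⟩) <;>
      simp only [hW.LL, hW.LM, hW_ML, hW.MM, hW.twist_L, hW.twist_M, map_smul, map_zero,
        LinearMap.smul_apply, smul_eq_mul, hLL, hLM, hML, hMM, mul_zero, add_zero]
    all_goals exact hc.antidiag_cyclic m n p

end QW22

/-- The numbers `⟨n⟩` are also all nonzero when `q` is a root of unity of order not divisible by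
`4`, so that, for example, primitive fifth roots of unity are included. -/
theorem beta_gamma_are_cocycles_general (q : ℂ) (hang : ∀ n, qang q n ≠ 0) (h3 : qnum q 3 ≠ 0)
    (br : Wq →ₗ[ℂ] Wq →ₗ[ℂ] Wq) (α : Wq →ₗ[ℂ] Wq) (hW : IsQW22 q br α)
    (β γ : Wq →ₗ[ℂ] Wq →ₗ[ℂ] ℂ)
    (hβLL : ∀ m n : ℤ, β (Lb m) (Lb n) = if m = -n then cocyc q m else 0)
    (hβLM : ∀ m n : ℤ, β (Lb m) (Mb n) = 0)
    (hβML : ∀ m n : ℤ, β (Mb m) (Lb n) = 0)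
    (hβMM : ∀ m n : ℤ, β (Mb m) (Mb n) = 0)
    (hγLM : ∀ m n : ℤ, γ (Lb m) (Mb n) = if m = -n then cocyc q m else 0)
    (hγML : ∀ m n : ℤ, γ (Mb m) (Lb n) = if m = -n then -cocyc q n else 0)
    (hγLL : ∀ m n : ℤ, γ (Lb m) (Lb n) = 0)
    (hγMM : ∀ m n : ℤ, γ (Mb m) (Mb n) = 0) :
    IsHomCocycle br α β ∧ IsHomCocycle br α γ := by
  have hc := isWittCocycle_cocyc (ne_zero_of_qnum_ne_zero h3) hang
  have hγML' (m n : ℤ) : γ (Mb m) (Lb n) = antidiag (cocyc q) m n := by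
    rw [hγML, antidiag]
    refine if_ctx_congr Iff.rfl (fun h => ?_) fun _ => rfl
    rw [h, cocyc_neg]
  exact ⟨hW.isHomCocycle_of_LL hc hβLL hβLM hβML hβMM,
    hW.isHomCocycle_of_LM hc hγLM hγML' hγLL hγMM⟩

/-- The bilinear maps `β` and `γ` are 2-cocycles on the Hom-Lie algebra
`(W_q, [·,·]_q, α)`. -/
theorem beta_gamma_are_cocycles (q : ℂ) (hq0 : q ≠ 0)
    (hq1 : ∀ k : ℤ, 1 ≤ k → q ^ k ≠ 1)
    (br : Wq →ₗ[ℂ] Wq →ₗ[ℂ] Wq) (α : Wq →ₗ[ℂ] Wq)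
    (hLL : ∀ n m : ℤ, br (Lb n) (Lb m) = qnum q (m - n) • Lb (m + n))
    (hLM : ∀ n m : ℤ, br (Lb n) (Mb m) = qnum q (m - n) • Mb (m + n))
    (hML : ∀ m n : ℤ, br (Mb m) (Lb n) = qnum q (n - m) • Mb (m + n))
    (hMM : ∀ n m : ℤ, br (Mb n) (Mb m) = 0)
    (hαL : ∀ n : ℤ, α (Lb n) = qang q n • Lb n)
    (hαM : ∀ n : ℤ, α (Mb n) = qang q n • Mb n)
    (β γ : Wq →ₗ[ℂ] Wq →ₗ[ℂ] ℂ)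
    (hβLL : ∀ m n : ℤ, β (Lb m) (Lb n) = if m = -n then cocyc q m else 0)
    (hβLM : ∀ m n : ℤ, β (Lb m) (Mb n) = 0)
    (hβML : ∀ m n : ℤ, β (Mb m) (Lb n) = 0)
    (hβMM : ∀ m n : ℤ, β (Mb m) (Mb n) = 0)
    (hγLM : ∀ m n : ℤ, γ (Lb m) (Mb n) = if m = -n then cocyc q m else 0)
    (hγML : ∀ m n : ℤ, γ (Mb m) (Lb n) = if m = -n then -cocyc q n else 0)
    (hγLL : ∀ m n : ℤ, γ (Lb m) (Lb n) = 0)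
    (hγMM : ∀ m n : ℤ, γ (Mb m) (Mb n) = 0) :
    (∀ x y : Wq, β x y = - β y x) ∧
    (∀ x y z : Wq,
      β (α x) (br y z) + β (α y) (br z x) + β (α z) (br x y) = 0) ∧
    (∀ x y : Wq, γ x y = - γ y x) ∧
    (∀ x y z : Wq,
      γ (α x) (br y z) + γ (α y) (br z x) + γ (α z) (br x y) = 0) := by
  obtain ⟨hβ, hγ⟩ := beta_gamma_are_cocycles_general q (qang_ne_zero hq0 hq1)
    (qnum_ne_zero hq0 hq1 three_ne_zero) br α ⟨hLL, hLM, hML, hMM, hαL, hαM⟩ β γ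
    hβLL hβLM hβML hβMM hγLM hγML hγLL hγMM
  exact ⟨hβ.skew, hβ.cyclic, hγ.skew, hγ.cyclic⟩
end
end
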